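/- Let C_{2π}(ℝ) denote the Banach lattice of continuous 2π-periodic functions f : ℝ → ℝ with the sup-norm and pointwise order, and let T_n (n ∈ ℕ) and A be weakly nonlinear and monotone operators from C_{2π}(ℝ) into itself such that A(1) = 1 and A(3 + 2cos + 2sin) = (A(−1 − cos))² + (A(−1 − sin))². Then T_n(f) → A(f) uniformly for every f ∈ C_{2π}(ℝ) if and only if T_n(f) → A(f) uniformly for each of the four test functions 1, −1 − cos, −1 − sin, and 3 + 2cos + 2sin. -/

import Mathlib

open Filter

instance : Fact (0 < 2 * Real.pi) := ⟨by positivity⟩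

instance : CompactSpace Real.Angle :=
  inferInstanceAs (CompactSpace (AddCircle (2 * Real.pi)))

/-- The cosine, as a continuous `2π`-periodic function (a function on the circle `ℝ/2πℤ`). -/
noncomputable def cosCM : C(Real.Angle, ℝ) := ⟨Real.Angle.cos, Real.Angle.continuous_cos⟩

/-- The sine, as a continuous `2π`-periodic function (a function on the circle `ℝ/2πℤ`). -/
noncomputable def sinCM : C(Real.Angle, ℝ) := ⟨Real.Angle.sin, Real.Angle.continuous_sin⟩

/-!
A sublinear functional `p` is the pointwise maximum of the linear functionals below it
(Hahn–Banach); if `p` is moreover monotone and translatable, these are positive and take the value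
`p 1` at `1`. Apply this to `p = A(·)(y)` for a fixed point `y`. The points `(L cos, L sin)`, for
`L` linear below `p`, form a subset of the unit disk that is contained in the right triangle

`a ≥ -p (-cos)`, `b ≥ -p (-sin)`, `a + b ≤ p (cos + sin)`

and touches each of its sides. The hypothesis on `A` says that the vertex `(-p (-cos), -p (-sin))`
has squared norm `1 + 2 d`, where `d` is the length of the legs. This forces `d = 0`, so all these
points coincide with a single `(cos θ, sin θ)`, and the classical Korovkin argument gives
`L f = f θ`: thus `A` is a composition operator. The test functions control the corresponding
triangles for `T n`, which shrink to `(cos θ, sin θ)` uniformly in `y`, and the same Korovkin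
estimate gives uniform convergence.
-/

open scoped Topology

section LinearMinorant

variable {E : Type*} [AddCommGroup E] [Module ℝ E] {p : E → ℝ}

theorem exists_linearMap_le_and_apply_eq (hsmul : ∀ c : ℝ, 0 ≤ c → ∀ x, p (c • x) = c * p x)
    (hadd : ∀ x y, p (x + y) ≤ p x + p y) (x : E) :
    ∃ L : E →ₗ[ℝ] ℝ, (∀ y, L y ≤ p y) ∧ L x = p x := by
  have hp0 : p 0 = 0 := by simpa using hsmul 0 le_rfl 0
  have mul_le (c : ℝ) : c * p x ≤ p (c • x) := by
    rcases le_total 0 c with hc | hc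
    · exact (hsmul c hc x).ge
    · have hneg := hsmul (-c) (neg_nonneg.2 hc) x
      have hsum := hadd (c • x) (-c • x)
      rw [neg_smul, add_neg_cancel, hp0, ← neg_smul, hneg] at hsum
      linarith
  have hspan (c : ℝ) (hc : c • x = 0) : c • p x = 0 := by
    rcases smul_eq_zero.1 hc with rfl | rfl
    · exact zero_smul ℝ _
    · rw [hp0, smul_zero]
  obtain ⟨L, hLx, hLp⟩ := exists_extension_of_le_sublinear
    (LinearPMap.mkSpanSingleton' x (p x) hspan) p (fun c hc ↦ hsmul c hc.le) hadd (by
      rintro ⟨y, hy⟩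
      obtain ⟨c, rfl⟩ := Submodule.mem_span_singleton.1 hy
      exact (LinearPMap.mkSpanSingleton'_apply x (p x) hspan c hy).trans_le (mul_le c))
  refine ⟨L, hLp, ?_⟩
  have hx := Submodule.mem_span_singleton_self (R := ℝ) x
  exact (hLx ⟨x, hx⟩).trans (LinearPMap.mkSpanSingleton'_apply_self x (p x) hspan hx)

theorem neg_map_neg_le_of_forall_le {L : E →ₗ[ℝ] ℝ} (hL : ∀ y, L y ≤ p y) (x : E) :
    -p (-x) ≤ L x := by
  have := hL (-x)
  rw [map_neg] at this
  linarith

theorem monotone_of_forall_le [PartialOrder E] [IsOrderedAddMonoid E] {L : E →ₗ[ℝ] ℝ}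
    (hL : ∀ y, L y ≤ p y) (hp : Monotone p) (hp0 : p 0 = 0) : Monotone L := by
  intro x y hxy
  have : L (x - y) ≤ 0 := (hL _).trans ((hp (sub_nonpos.2 hxy)).trans hp0.le)
  rwa [map_sub, sub_nonpos] at this

end LinearMinorant

section PositiveFunctional

variable {X : Type*} [TopologicalSpace X] {L : C(X, ℝ) →ₗ[ℝ] ℝ}

theorem sq_add_sq_le_one_of_monotone (hL : Monotone L) (hL1 : L 1 = 1) {u v : C(X, ℝ)}
    (huv : ∀ x, u x ^ 2 + v x ^ 2 ≤ 1) : L u ^ 2 + L v ^ 2 ≤ 1 := by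
  have pointwise : L u • u + L v • v ≤ ((1 + L u ^ 2 + L v ^ 2) / 2) • 1 :=
    ContinuousMap.le_def.2 fun x ↦ by
      simp only [ContinuousMap.add_apply, ContinuousMap.smul_apply, ContinuousMap.one_apply,
        smul_eq_mul]
      linarith [huv x, sq_nonneg (L u - u x), sq_nonneg (L v - v x)]
  have := hL pointwise
  simp only [map_add, map_smul, smul_eq_mul, hL1] at this
  linarith

theorem abs_map_sub_mul_map_one_le (hL : Monotone L) {f k : C(X, ℝ)} {c ε K : ℝ}
    (hf : ∀ x, |f x - c| ≤ ε + K * k x) : |L f - c * L 1| ≤ ε * L 1 + K * L k := by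
  have upper : f - c • 1 ≤ ε • 1 + K • k := fun x ↦ by
    simpa using (abs_le.1 (hf x)).2
  have lower : -(ε • 1 + K • k) ≤ f - c • 1 := fun x ↦ by
    simpa [add_comm] using (abs_le.1 (hf x)).1
  have map_upper := hL upper
  have map_lower := hL lower
  simp only [map_neg, map_sub, map_add, map_smul, smul_eq_mul] at map_upper map_lower
  exact abs_le.2 ⟨map_lower, map_upper⟩

end PositiveFunctional

/-- Weakly nonlinear (that is, sublinear and translatable) maps on `C(X, ℝ)`. The codomain is
arbitrary so that both operators and real functionals are covered. -/
structure IsWeaklyNonlinear {X E : Type*} [TopologicalSpace X] [Add E] [SMul ℝ E] [LE E]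
    (T : C(X, ℝ) → E) : Prop where
  map_add_le : ∀ f g, T (f + g) ≤ T f + T g
  map_smul_of_nonneg : ∀ a : ℝ, 0 ≤ a → ∀ f, T (a • f) = a • T f
  map_add_smul_one_of_nonneg : ∀ f, ∀ a : ℝ, 0 ≤ a → T (f + a • 1) = T f + a • T 1

namespace IsWeaklyNonlinear

section Module

variable {X E : Type*} [TopologicalSpace X] [AddCommGroup E] [Module ℝ E] [LE E]
  {T : C(X, ℝ) → E}

protected theorem map_zero (hT : IsWeaklyNonlinear T) : T 0 = 0 := by
  simpa using hT.map_smul_of_nonneg 0 le_rfl 0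

theorem map_add_smul_one (hT : IsWeaklyNonlinear T) (f : C(X, ℝ)) (a : ℝ) :
    T (f + a • 1) = T f + a • T 1 := by
  rcases le_total 0 a with ha | ha
  · exact hT.map_add_smul_one_of_nonneg f a ha
  · have := hT.map_add_smul_one_of_nonneg (f + a • 1) (-a) (neg_nonneg.2 ha)
    rw [neg_smul, add_neg_cancel_right, neg_smul, ← sub_eq_add_neg] at this
    exact sub_eq_iff_eq_add.1 this.symm

theorem map_neg_one (hT : IsWeaklyNonlinear T) : T (-1) = -T 1 := by
  simpa [hT.map_zero] using hT.map_add_smul_one 0 (-1)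

theorem map_neg_one_sub (hT : IsWeaklyNonlinear T) (u : C(X, ℝ)) :
    T (-1 - u) = T (-u) - T 1 := by
  have : -1 - u = -u + (-1 : ℝ) • 1 := by rw [neg_one_smul]; abel
  rw [this, hT.map_add_smul_one, neg_one_smul, sub_eq_add_neg]

theorem map_three_add_two_smul (hT : IsWeaklyNonlinear T) (u v : C(X, ℝ)) :
    T (3 + (2 : ℝ) • u + (2 : ℝ) • v) = (2 : ℝ) • T (u + v) + (3 : ℝ) • T 1 := by
  have three_smul_one : (3 : ℝ) • (1 : C(X, ℝ)) = 3 := by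
    rw [← Algebra.algebraMap_eq_smul_one, map_ofNat]
  rw [← hT.map_smul_of_nonneg 2 zero_le_two, ← hT.map_add_smul_one, three_smul_one, smul_add]
  congr 1
  abel

end Module

protected theorem apply {X Y : Type*} [TopologicalSpace X] [TopologicalSpace Y]
    {T : C(X, ℝ) → C(Y, ℝ)} (hT : IsWeaklyNonlinear T) (y : Y) :
    IsWeaklyNonlinear fun f ↦ T f y where
  map_add_le f g := hT.map_add_le f g y
  map_smul_of_nonneg a ha f := by rw [hT.map_smul_of_nonneg a ha, ContinuousMap.smul_apply]
  map_add_smul_one_of_nonneg f a ha := by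
    rw [hT.map_add_smul_one_of_nonneg f a ha, ContinuousMap.add_apply, ContinuousMap.smul_apply]

section Functional

variable {X : Type*} [TopologicalSpace X] {p : C(X, ℝ) → ℝ}

theorem map_one_eq_of_forall_le (hp : IsWeaklyNonlinear p) {L : C(X, ℝ) →ₗ[ℝ] ℝ}
    (hL : ∀ f, L f ≤ p f) : L 1 = p 1 := by
  refine (hL 1).antisymm ?_
  simpa [hp.map_neg_one] using neg_map_neg_le_of_forall_le hL 1

theorem exists_sq_add_sq_eq_one (hp : IsWeaklyNonlinear p) (hmono : Monotone p) (hp1 : p 1 = 1)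
    {u v : C(X, ℝ)} (huv : ∀ x, u x ^ 2 + v x ^ 2 ≤ 1)
    (hle : p (3 + (2 : ℝ) • u + (2 : ℝ) • v) ≤ p (-1 - u) ^ 2 + p (-1 - v) ^ 2) :
    ∃ a b : ℝ, a ^ 2 + b ^ 2 = 1 ∧ p (-u) = -a ∧ p (-v) = -b ∧ p (u + v) = a + b := by
  have sq_add_sq_le {L : C(X, ℝ) →ₗ[ℝ] ℝ} (hL : ∀ f, L f ≤ p f) : L u ^ 2 + L v ^ 2 ≤ 1 :=
    sq_add_sq_le_one_of_monotone (monotone_of_forall_le hL hmono hp.map_zero)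
      ((hp.map_one_eq_of_forall_le hL).trans hp1) huv
  obtain ⟨L, hL, hLu⟩ := exists_linearMap_le_and_apply_eq hp.map_smul_of_nonneg hp.map_add_le (-u)
  obtain ⟨M, hM, hMv⟩ := exists_linearMap_le_and_apply_eq hp.map_smul_of_nonneg hp.map_add_le (-v)
  rw [map_neg] at hLu hMv
  have hLdisk := sq_add_sq_le hL
  have hMv_le : |M v| ≤ 1 := by
    rw [← sq_le_one_iff_abs_le_one]
    linarith [sq_add_sq_le hM, sq_nonneg (M u)]
  have hMv_le_Lv : M v ≤ L v := by linarith [neg_map_neg_le_of_forall_le hL v]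
  have hadd_le : L u + L v ≤ p (u + v) := by simpa using hL (u + v)
  rw [hp.map_three_add_two_smul, hp.map_neg_one_sub, hp.map_neg_one_sub, ← hLu, ← hMv, hp1] at hle
  simp only [smul_eq_mul] at hle
  have hmul_nonpos : (L v - M v) * (2 + L v + M v) ≤ 0 := by linarith
  have hMv_eq : M v = L v := by
    by_contra hne
    have hlt : M v < L v := lt_of_le_of_ne hMv_le_Lv hne
    have hfactor_pos : 0 < 2 + L v + M v := by linarith [(abs_le.1 hMv_le).1]
    exact hmul_nonpos.not_gt (mul_pos (sub_pos.2 hlt) hfactor_pos)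
  rw [hMv_eq] at hle hMv
  exact ⟨L u, L v, by linarith, hLu.symm, hMv.symm, by linarith⟩

end Functional

end IsWeaklyNonlinear

theorem exists_le_add_mul_of_eq_zero {X : Type*} [TopologicalSpace X] [CompactSpace X]
    {F G : X → ℝ} (hF : Continuous F) (hG : Continuous G) (hG_nonneg : ∀ x, 0 ≤ G x)
    (hFG : ∀ x, G x = 0 → F x ≤ 0) {ε : ℝ} (hε : 0 < ε) :
    ∃ K : ℝ, 0 ≤ K ∧ ∀ x, F x ≤ ε + K * G x := by
  have hcompact : IsCompact {x | ε ≤ F x} := (isClosed_le continuous_const hF).isCompact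
  have hG_pos : ∀ x ∈ {x | ε ≤ F x}, 0 < G x := fun x hx ↦
    (hG_nonneg x).lt_of_ne' fun hx0 ↦ (hε.trans_le hx).not_ge (hFG x hx0)
  obtain ⟨m, hm, hmG⟩ := hcompact.exists_forall_le' hG.continuousOn hG_pos
  obtain ⟨B, hB⟩ := isCompact_univ.bddAbove_image hF.continuousOn
  have hFB (x : X) : F x ≤ max B 0 :=
    (hB (Set.mem_image_of_mem F (Set.mem_univ x))).trans (le_max_left _ _)
  have hK : 0 ≤ max B 0 / m := by positivity
  refine ⟨max B 0 / m, hK, fun x ↦ ?_⟩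
  rcases le_total ε (F x) with hx | hx
  · calc F x ≤ max B 0 / m * m := (hFB x).trans_eq (div_mul_cancel₀ _ hm.ne').symm
      _ ≤ max B 0 / m * G x := mul_le_mul_of_nonneg_left (hmG x hx) hK
      _ ≤ ε + max B 0 / m * G x := le_add_of_nonneg_left hε.le
  · exact hx.trans (le_add_of_nonneg_right (mul_nonneg hK (hG_nonneg x)))

section Angle

@[simp]
theorem cosCM_apply (t : Real.Angle) : cosCM t = t.cos := rfl

@[simp]
theorem sinCM_apply (t : Real.Angle) : sinCM t = t.sin := rfl

theorem angle_eq_of_cos_eq_of_sin_eq {θ t : Real.Angle} (hcos : θ.cos = t.cos)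
    (hsin : θ.sin = t.sin) : θ = t := by
  rw [← Real.Angle.arg_toCircle θ, ← Real.Angle.arg_toCircle t, Real.Angle.coe_toCircle,
    Real.Angle.coe_toCircle, hcos, hsin]

theorem exists_angle_cos_eq_sin_eq {a b : ℝ} (hab : a ^ 2 + b ^ 2 = 1) :
    ∃ θ : Real.Angle, θ.cos = a ∧ θ.sin = b := by
  have hnorm : ‖(⟨a, b⟩ : ℂ)‖ = 1 := by
    rw [Complex.norm_def, Complex.normSq_mk, ← sq, ← sq, hab, Real.sqrt_one]
  refine ⟨(Complex.arg ⟨a, b⟩ : ℝ), ?_, ?_⟩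
  · simpa [hnorm] using Complex.norm_mul_cos_arg ⟨a, b⟩
  · simpa [hnorm] using Complex.norm_mul_sin_arg ⟨a, b⟩

/-- The function `t ↦ 1 - cos (t - θ)`, written in the span of `1`, `cos` and `sin`. It is
nonnegative and vanishes only at `θ`. -/
noncomputable def versineAt (θ : Real.Angle) : C(Real.Angle, ℝ) :=
  1 - θ.cos • cosCM - θ.sin • sinCM

theorem versineAt_apply (θ t : Real.Angle) :
    versineAt θ t = ((θ.cos - t.cos) ^ 2 + (θ.sin - t.sin) ^ 2) / 2 := by
  simp only [versineAt, ContinuousMap.sub_apply, ContinuousMap.one_apply,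
    ContinuousMap.smul_apply, smul_eq_mul, cosCM_apply, sinCM_apply]
  linarith [θ.cos_sq_add_sin_sq, t.cos_sq_add_sin_sq]

theorem versineAt_eq_zero_iff {θ t : Real.Angle} : versineAt θ t = 0 ↔ θ = t := by
  refine ⟨fun h ↦ ?_, fun h ↦ by simp [versineAt_apply, h]⟩
  rw [versineAt_apply, div_eq_zero_iff, or_iff_left two_ne_zero,
    add_eq_zero_iff_of_nonneg (sq_nonneg _) (sq_nonneg _), sq_eq_zero_iff, sq_eq_zero_iff,
    sub_eq_zero, sub_eq_zero] at h
  exact angle_eq_of_cos_eq_of_sin_eq h.1 h.2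

theorem exists_abs_sub_le_add_mul_versineAt (f : C(Real.Angle, ℝ)) {ε : ℝ} (hε : 0 < ε) :
    ∃ K : ℝ, 0 ≤ K ∧ ∀ θ t, |f t - f θ| ≤ ε + K * versineAt θ t := by
  have hcos := Real.Angle.continuous_cos
  have hsin := Real.Angle.continuous_sin
  obtain ⟨K, hK, hfK⟩ := exists_le_add_mul_of_eq_zero
    (F := fun q : Real.Angle × Real.Angle ↦ |f q.2 - f q.1|) (G := fun q ↦ versineAt q.1 q.2)
    (by fun_prop) (by simp only [versineAt_apply]; fun_prop)
    (fun q ↦ by rw [versineAt_apply]; positivity)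
    (fun q hq ↦ by simp [versineAt_eq_zero_iff.1 hq]) hε
  exact ⟨K, hK, fun θ t ↦ hfK (θ, t)⟩

theorem map_versineAt_le {L : C(Real.Angle, ℝ) →ₗ[ℝ] ℝ} {θ : Real.Angle} {δ : ℝ}
    (h1 : L 1 ≤ 1 + δ) (hcos : θ.cos - δ ≤ L cosCM) (hsin : θ.sin - δ ≤ L sinCM)
    (hadd : L (cosCM + sinCM) ≤ θ.cos + θ.sin + δ) : L (versineAt θ) ≤ 5 * δ := by
  rw [map_add] at hadd
  have hθ := θ.cos_sq_add_sin_sq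
  have hcos_diff : |L cosCM - θ.cos| ≤ 2 * δ := abs_le.2 ⟨by linarith, by linarith⟩
  have hsin_diff : |L sinCM - θ.sin| ≤ 2 * δ := abs_le.2 ⟨by linarith, by linarith⟩
  have hcos_le : |θ.cos| ≤ 1 := by
    rw [← sq_le_one_iff_abs_le_one]
    linarith [sq_nonneg θ.sin]
  have hsin_le : |θ.sin| ≤ 1 := by
    rw [← sq_le_one_iff_abs_le_one]
    linarith [sq_nonneg θ.cos]
  have neg_mul_le {c x : ℝ} (hc : |c| ≤ 1) (hx : |x| ≤ 2 * δ) : -(c * x) ≤ 2 * δ :=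
    calc -(c * x) ≤ |c| * |x| := (neg_le_abs _).trans_eq (abs_mul c x)
      _ ≤ 2 * δ := (mul_le_of_le_one_left (abs_nonneg x) hc).trans hx
  have hcos_mul := neg_mul_le hcos_le hcos_diff
  have hsin_mul := neg_mul_le hsin_le hsin_diff
  simp only [versineAt, map_sub, map_smul, smul_eq_mul]
  linarith

end Angle

namespace IsWeaklyNonlinear

theorem abs_map_sub_apply_le {p : C(Real.Angle, ℝ) → ℝ} (hp : IsWeaklyNonlinear p)
    (hmono : Monotone p) {θ : Real.Angle} {δ : ℝ} (h1 : |p 1 - 1| ≤ δ)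
    (hcos : p (-cosCM) ≤ -θ.cos + δ) (hsin : p (-sinCM) ≤ -θ.sin + δ)
    (hadd : p (cosCM + sinCM) ≤ θ.cos + θ.sin + δ) {f : C(Real.Angle, ℝ)} {ε K : ℝ} (hε : 0 ≤ ε)
    (hK : 0 ≤ K) (hf : ∀ t, |f t - f θ| ≤ ε + K * versineAt θ t) :
    |p f - f θ| ≤ ε + (ε + 5 * K + ‖f‖) * δ := by
  obtain ⟨L, hL, hLf⟩ := exists_linearMap_le_and_apply_eq hp.map_smul_of_nonneg hp.map_add_le f
  rw [← hp.map_one_eq_of_forall_le hL] at h1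
  have hL1 : L 1 ≤ 1 + δ := by linarith [(abs_le.1 h1).2]
  have hversine : L (versineAt θ) ≤ 5 * δ :=
    map_versineAt_le hL1 (by linarith [neg_map_neg_le_of_forall_le hL cosCM])
      (by linarith [neg_map_neg_le_of_forall_le hL sinCM]) ((hL _).trans hadd)
  calc |p f - f θ| = |(L f - f θ * L 1) + f θ * (L 1 - 1)| := by rw [← hLf]; ring_nf
    _ ≤ |L f - f θ * L 1| + |f θ| * |L 1 - 1| := by rw [← abs_mul]; exact abs_add_le _ _
    _ ≤ (ε * L 1 + K * L (versineAt θ)) + ‖f‖ * δ := by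
      gcongr
      · exact abs_map_sub_mul_map_one_le (monotone_of_forall_le hL hmono hp.map_zero) hf
      · exact f.norm_coe_le_norm θ
    _ ≤ (ε * (1 + δ) + K * (5 * δ)) + ‖f‖ * δ := by gcongr
    _ = ε + (ε + 5 * K + ‖f‖) * δ := by ring

theorem exists_forall_map_eq_apply {p : C(Real.Angle, ℝ) → ℝ} (hp : IsWeaklyNonlinear p)
    (hmono : Monotone p) (hp1 : p 1 = 1)
    (hle : p (3 + (2 : ℝ) • cosCM + (2 : ℝ) • sinCM) ≤ p (-1 - cosCM) ^ 2 + p (-1 - sinCM) ^ 2) :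
    ∃ θ : Real.Angle, ∀ f, p f = f θ := by
  obtain ⟨a, b, hab, hcos, hsin, hadd⟩ :=
    hp.exists_sq_add_sq_eq_one hmono hp1 (fun t ↦ t.cos_sq_add_sin_sq.le) hle
  obtain ⟨θ, rfl, rfl⟩ := exists_angle_cos_eq_sin_eq hab
  refine ⟨θ, fun f ↦ eq_of_forall_dist_le fun ε hε ↦ ?_⟩
  obtain ⟨K, hK, hf⟩ := exists_abs_sub_le_add_mul_versineAt f hε
  simpa [Real.dist_eq] using hp.abs_map_sub_apply_le (δ := 0) hmono (by simp [hp1]) (by simp [hcos])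
    (by simp [hsin]) (by simp [hadd]) hε.le hK (hf θ)

end IsWeaklyNonlinear

section Convergence

variable {ι Y : Type*} [TopologicalSpace Y] [CompactSpace Y] {l : Filter ι}
  {T : ι → C(Real.Angle, ℝ) → C(Y, ℝ)} {A : C(Real.Angle, ℝ) → C(Y, ℝ)}

theorem tendsto_of_tendsto_one_neg_cos_neg_sin_cos_add_sin (hT : ∀ n, IsWeaklyNonlinear (T n))
    (hTmono : ∀ n, Monotone (T n)) {φ : Y → Real.Angle} (hA : ∀ f y, A f y = f (φ y))
    (h1 : Tendsto (T · 1) l (𝓝 (A 1)))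
    (hcos : Tendsto (T · (-cosCM)) l (𝓝 (A (-cosCM))))
    (hsin : Tendsto (T · (-sinCM)) l (𝓝 (A (-sinCM))))
    (hadd : Tendsto (T · (cosCM + sinCM)) l (𝓝 (A (cosCM + sinCM)))) (f : C(Real.Angle, ℝ)) :
    Tendsto (T · f) l (𝓝 (A f)) := by
  rw [Metric.tendsto_nhds]
  intro e he
  obtain ⟨K, hK, hf⟩ := exists_abs_sub_le_add_mul_versineAt f (half_pos he)
  obtain ⟨δ, hδ, hδe⟩ := exists_pos_mul_lt (half_pos he) (e / 2 + 5 * K + ‖f‖)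
  filter_upwards [Metric.tendsto_nhds.1 h1 δ hδ, Metric.tendsto_nhds.1 hcos δ hδ,
    Metric.tendsto_nhds.1 hsin δ hδ, Metric.tendsto_nhds.1 hadd δ hδ] with n hn1 hncos hnsin hnadd
  refine lt_of_le_of_lt ((ContinuousMap.dist_le (by positivity)).2 fun y ↦ ?_)
    ((add_lt_add_right hδe (e / 2)).trans_eq (add_halves e))
  have abs_sub_le {g : C(Real.Angle, ℝ)} (hg : dist (T n g) (A g) < δ) :
      |T n g y - g (φ y)| ≤ δ := by
    rw [← hA, ← Real.dist_eq]
    exact (ContinuousMap.dist_apply_le_dist y).trans hg.le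
  have le_add {g : C(Real.Angle, ℝ)} (hg : dist (T n g) (A g) < δ) : T n g y ≤ g (φ y) + δ :=
    sub_le_iff_le_add'.1 (abs_le.1 (abs_sub_le hg)).2
  rw [Real.dist_eq, hA]
  exact ((hT n).apply y).abs_map_sub_apply_le (fun _ _ hfg ↦ hTmono n hfg y) (abs_sub_le hn1)
    (le_add hncos) (le_add hnsin) (le_add hnadd) (half_pos he).le hK (hf (φ y))

theorem korovkin_trigonometric_general (hT : ∀ n, IsWeaklyNonlinear (T n))
    (hTmono : ∀ n, Monotone (T n)) (hA : IsWeaklyNonlinear A) (hAmono : Monotone A)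
    (hA1 : A 1 = 1)
    (hAle : A (3 + (2 : ℝ) • cosCM + (2 : ℝ) • sinCM) ≤
      A (-1 - cosCM) ^ 2 + A (-1 - sinCM) ^ 2) :
    (∀ f, Tendsto (T · f) l (𝓝 (A f))) ↔
      Tendsto (T · 1) l (𝓝 (A 1)) ∧
      Tendsto (T · (-1 - cosCM)) l (𝓝 (A (-1 - cosCM))) ∧
      Tendsto (T · (-1 - sinCM)) l (𝓝 (A (-1 - sinCM))) ∧
      Tendsto (T · (3 + (2 : ℝ) • cosCM + (2 : ℝ) • sinCM)) l
        (𝓝 (A (3 + (2 : ℝ) • cosCM + (2 : ℝ) • sinCM))) := by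
  refine ⟨fun h ↦ ⟨h _, h _, h _, h _⟩, fun ⟨h1, hcos, hsin, hadd⟩ ↦ ?_⟩
  have exists_angle (y : Y) : ∃ θ : Real.Angle, ∀ f, A f y = f θ :=
    (hA.apply y).exists_forall_map_eq_apply (fun _ _ hfg ↦ hAmono hfg y)
      (by rw [hA1, ContinuousMap.one_apply]) (hAle y)
  choose φ hφ using exists_angle
  have tendsto_neg {u : C(Real.Angle, ℝ)} (hu : Tendsto (T · (-1 - u)) l (𝓝 (A (-1 - u)))) :
      Tendsto (T · (-u)) l (𝓝 (A (-u))) := by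
    simpa [(hT _).map_neg_one_sub, hA.map_neg_one_sub] using hu.add h1
  have tendsto_add : Tendsto (T · (cosCM + sinCM)) l (𝓝 (A (cosCM + sinCM))) := by
    simpa [(hT _).map_three_add_two_smul, hA.map_three_add_two_smul] using
      (hadd.sub (h1.const_smul (3 : ℝ))).const_smul (2⁻¹ : ℝ)
  exact tendsto_of_tendsto_one_neg_cos_neg_sin_cos_add_sin hT hTmono (fun f y ↦ hφ y f) h1
    (tendsto_neg hcos) (tendsto_neg hsin) tendsto_add

end Convergence

/-- **Korovkin-type theorem for `2π`-periodic functions (Theorem 5).** If `T_n` and `A` are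
weakly nonlinear and monotone operators on the space `C_{2π}(ℝ)` of continuous `2π`-periodic
functions with `A 1 = 1` and `A(3 + 2cos + 2sin) = (A(−1−cos))² + (A(−1−sin))²`, then
`T_n f → A f` uniformly for every `f` iff this occurs for the four test functions
`1, −1−cos, −1−sin, 3 + 2cos + 2sin`. -/
theorem korovkin_trigonometric
    (T : ℕ → C(Real.Angle, ℝ) → C(Real.Angle, ℝ)) (A : C(Real.Angle, ℝ) → C(Real.Angle, ℝ))
    (hTsub : ∀ n, ∀ f g : C(Real.Angle, ℝ), T n (f + g) ≤ T n f + T n g)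
    (hTpos : ∀ n, ∀ (a : ℝ), 0 ≤ a → ∀ f : C(Real.Angle, ℝ), T n (a • f) = a • T n f)
    (hTtr : ∀ n, ∀ f : C(Real.Angle, ℝ), ∀ a : ℝ, 0 ≤ a →
      T n (f + a • 1) = T n f + a • T n 1)
    (hTmono : ∀ n, Monotone (T n))
    (hAsub : ∀ f g : C(Real.Angle, ℝ), A (f + g) ≤ A f + A g)
    (hApos : ∀ (a : ℝ), 0 ≤ a → ∀ f : C(Real.Angle, ℝ), A (a • f) = a • A f)
    (hAtr : ∀ f : C(Real.Angle, ℝ), ∀ a : ℝ, 0 ≤ a → A (f + a • 1) = A f + a • A 1)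
    (hAmono : Monotone A)
    (hA1 : A 1 = 1)
    (hAfe : A (3 + (2 : ℝ) • cosCM + (2 : ℝ) • sinCM) =
      (A (-1 - cosCM)) ^ 2 + (A (-1 - sinCM)) ^ 2) :
    (∀ f : C(Real.Angle, ℝ), Tendsto (fun n => ‖T n f - A f‖) atTop (nhds 0)) ↔
      (Tendsto (fun n => ‖T n 1 - A 1‖) atTop (nhds 0) ∧
       Tendsto (fun n => ‖T n (-1 - cosCM) - A (-1 - cosCM)‖) atTop (nhds 0) ∧
       Tendsto (fun n => ‖T n (-1 - sinCM) - A (-1 - sinCM)‖) atTop (nhds 0) ∧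
       Tendsto (fun n => ‖T n (3 + (2 : ℝ) • cosCM + (2 : ℝ) • sinCM) -
         A (3 + (2 : ℝ) • cosCM + (2 : ℝ) • sinCM)‖) atTop (nhds 0)) := by
  simp only [← tendsto_iff_norm_sub_tendsto_zero]
  exact korovkin_trigonometric_general (fun n ↦ ⟨hTsub n, hTpos n, hTtr n⟩) hTmono
    ⟨hAsub, hApos, hAtr⟩ hAmono hA1 hAfe.le
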